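/- arXiv:1812.03452 — 4 statements merged into one kernel-verified Lean document; each statement's English description precedes it below -/
import Mathlib

section
/- Let G be a group and i an integer such that the group cohomology H^i(G, ZG) (with coefficients in the group ring ZG regarded as a G-module via left multiplication) is finitely generated as an abelian group. Let A be a ZG-module whose underlying abelian group is finitely generated and free. Then Ext^i_{ZG}(A, ZG) is a finitely generated abelian group. -/
open CategoryTheory Opposite

/-- `Ext^i_{ℤG}(A, ℤG)` as an abelian group (a `ℤ`-module), where `ℤG` is the
integral group ring `MonoidAlgebra ℤ G` acting on itself by left multiplication. -/
noncomputable def extZG (G : Type) [Group G] (i : ℕ)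
    (A : Type) [AddCommGroup A] [Module (MonoidAlgebra ℤ G) A] : ModuleCat ℤ :=
  ((Ext ℤ (ModuleCat (MonoidAlgebra ℤ G)) i).obj
    (op (ModuleCat.of (MonoidAlgebra ℤ G) A))).obj
    (ModuleCat.of (MonoidAlgebra ℤ G) (MonoidAlgebra ℤ G))

/-!
For `A` projective over `k`, the exact adjunction `A ⊗ - ⊣ Hom_k(A, -)` on representations gives
`Ext^n(A, k[G]) ≅ H^n(G, Hom_k(A, k[G]))`, where `G` acts on `Hom_k(A, k[G])` by conjugation. If `A`
is moreover finitely generated, a dual basis `a_i, φ_i` of `A` over `k` makes `Hom_k(A, k[G])` an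
equivariant retract of `k[G]^m`: send `f` to the elements `∑ g, f(g a_i)_g g`, and recover it from
`f(v)_g = ∑ i, φ_i(g⁻¹ v) f(g a_i)_g`. Hence `H^n(G, Hom_k(A, k[G]))` is a quotient of
`H^n(G, k[G])^m`.
-/

open MonoidalCategory Representation

universe u v

/-- The hom-set bijection of an adjunction with `R`-linear left adjoint, as an `R`-linear
equivalence. -/
noncomputable def adjunctionHomLinearEquiv (R : Type*) {C D : Type*} [Ring R] [Category* C]
    [Category* D] [Preadditive C] [Preadditive D] [Linear R C] [Linear R D] {F : C ⥤ D} {H : D ⥤ C}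
    [F.Additive] [F.Linear R] (adj : F ⊣ H) (X : C) (Y : D) :
    (X ⟶ H.obj Y) ≃ₗ[R] (F.obj X ⟶ Y) where
  __ := (adj.homAddEquiv X Y).symm
  map_smul' r f := by simp [Adjunction.homEquiv_counit]

section ExtAdjunction

variable (R : Type*) {C D : Type*} [Ring R] [Category.{v} C] [Category.{v} D]
  [Abelian C] [Abelian D] [Linear R C] [Linear R D] {F : C ⥤ D} {H : D ⥤ C}
  [F.Additive] [F.Linear R]

/-- For an adjunction `F ⊣ H`, the isomorphism of cochain complexes `Hom(P, H Y) ≅ Hom(F P, Y)`,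
which computes both sides of `extAdjunctionIso`. -/
noncomputable def linearYonedaObjAdjunctionIso (adj : F ⊣ H) (P : ChainComplex C ℕ) (Y : D) :
    P.linearYonedaObj R (H.obj Y) ≅
      ChainComplex.linearYonedaObj ((F.mapHomologicalComplex _).obj P) R Y :=
  HomologicalComplex.Hom.isoOfComponents
    (fun n ↦ (adjunctionHomLinearEquiv R adj (P.X n) Y).toModuleIso) fun i j _ ↦ by
      ext f
      exact (adj.homEquiv_naturality_left_symm (P.d j i) f).symm

/-- `Ext^n(X, H Y) ≅ Ext^n(F X, Y)` for an adjunction `F ⊣ H` of exact functors: `F` carries a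
projective resolution of `X` to one of `F X`. -/
noncomputable def extAdjunctionIso [EnoughProjectives C] [EnoughProjectives D]
    [F.PreservesMonomorphisms] [H.PreservesEpimorphisms] (adj : F ⊣ H) (n : ℕ) (X : C) (Y : D) :
    ((Ext R C n).obj (op X)).obj (H.obj Y) ≅ ((Ext R D n).obj (op (F.obj X))).obj Y :=
  have : F.IsLeftAdjoint := adj.isLeftAdjoint
  have : F.PreservesProjectiveObjects :=
    Functor.preservesProjectiveObjects_of_adjunction_of_preservesEpimorphisms adj
  have : F.PreservesHomology := Functor.preservesHomology_of_preservesMonos_and_cokernels F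
  let P := ProjectiveResolution.of X
  P.isoExt n (H.obj Y) ≪≫
    (HomologicalComplex.homologyFunctor _ _ n).mapIso
      (linearYonedaObjAdjunctionIso R adj P.complex Y) ≪≫
    ((F.mapProjectiveResolution P).isoExt n Y).symm

end ExtAdjunction

section InternalHom

variable {k G : Type u} [CommRing k] [Group G] (A : Rep.{u} k G)

instance preservesEpimorphisms_ihom [Module.Projective k A] :
    (ihom A).PreservesEpimorphisms where
  preserves {X Y} f hf := by
    rw [Rep.epi_iff_surjective] at hf ⊢
    exact fun φ ↦ Module.projective_lifting_property f.hom.toLinearMap φ hf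

instance preservesMonomorphisms_tensorLeft [Module.Flat k A] :
    (tensorLeft A).PreservesMonomorphisms where
  preserves {X Y} f hf := by
    rw [Rep.mono_iff_injective] at hf ⊢
    exact Module.Flat.lTensor_preserves_injective_linearMap (M := A) f.hom.toLinearMap hf

/-- `H^n(G, Hom_k(A, B)) ≅ Ext^n(A, B)` for `A` projective over `k`, where `G` acts on `Hom_k(A, B)`
by conjugation. -/
noncomputable def groupCohomologyIHomIsoExt [Module.Projective k A] (B : Rep.{u} k G) (n : ℕ) :
    groupCohomology ((ihom A).obj B) n ≅ ((Ext k (Rep k G) n).obj (op A)).obj B :=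
  groupCohomologyIsoExt _ n ≪≫
    extAdjunctionIso k (ihom.adjunction A) n (Rep.trivial k G k) B ≪≫
    ((Ext k (Rep k G) n).mapIso (ρ_ A).symm.op).app B

end InternalHom

theorem finite_of_iso {R : Type*} [Ring R] {M N : ModuleCat R} (e : M ≅ N) [Module.Finite R M] :
    Module.Finite R N :=
  .equiv e.toLinearEquiv

theorem finite_obj_of_sum_comp_eq_id {R C ι : Type*} [Ring R] [Category* C] [Preadditive C]
    [Fintype ι] (F : C ⥤ ModuleCat R) [F.Additive] {X Y : C} {p : ι → (Y ⟶ X)} {q : ι → (X ⟶ Y)}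
    (h : ∑ j, p j ≫ q j = 𝟙 Y) (hX : Module.Finite R (F.obj X)) : Module.Finite R (F.obj Y) := by
  let s : (ι → F.obj X) →ₗ[R] F.obj Y := ∑ j, (F.map (q j)).hom ∘ₗ LinearMap.proj j
  have sum_map : ∑ j, F.map (p j) ≫ F.map (q j) = 𝟙 (F.obj Y) := by
    simpa only [F.map_sum, F.map_comp, F.map_id] using congrArg F.map h
  refine Module.Finite.of_surjective s fun y ↦ ⟨fun j ↦ F.map (p j) y, ?_⟩
  simpa [s, ModuleCat.hom_sum] using ConcreteCategory.congr_hom sum_map y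

section Untwisting

theorem finite_setOf_exists_apply_ne_zero {k V M α : Type*} [Semiring k] [AddCommMonoid V]
    [Module k V] [Module.Finite k V] [AddCommMonoid M] [Module k M] (f : V →ₗ[k] α →₀ M) :
    {x | ∃ v, f v x ≠ 0}.Finite := by
  obtain ⟨s, hs⟩ := Module.finite_def.1 ‹Module.Finite k V›
  refine (s.finite_toSet.biUnion fun v _ ↦ (f v).hasFiniteSupport).subset fun x ⟨v, hv⟩ ↦ ?_
  by_contra hx
  have vanish : Finsupp.lapply x ∘ₗ f = 0 :=
    LinearMap.ext_on hs fun w hw ↦ by_contra fun hw' ↦ hx (Set.mem_biUnion hw hw')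
  exact hv (LinearMap.congr_fun vanish v)

variable {k G V : Type*} [CommRing k] [Group G] [AddCommGroup V] [Module k V]
  (ρ : Representation k G V)

/-- The `G`-map `Hom_k(V, k[G]) → k[G]` sending `f` to `∑ g, f(g v)_g g`, where `x_g` is the
coefficient of `x` at `g`; the sum is finite because `V` is finitely generated. -/
noncomputable def diagCoeff [Module.Finite k V] (v : V) :
    (linHom ρ (leftRegular k G)).IntertwiningMap (leftRegular k G) where
  toFun f := .ofCoeff <| .ofSupportFinite (fun g ↦ (f (ρ g v)).coeff g) <|
    (finite_setOf_exists_apply_ne_zero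
      ((MonoidAlgebra.coeffLinearEquiv k).toLinearMap ∘ₗ f)).subset fun g hg ↦ ⟨_, hg⟩
  map_add' _ _ := by ext; rfl
  map_smul' _ _ := by ext; rfl
  isIntertwining' g := by
    ext f h
    simp [Finsupp.ofSupportFinite_coe, coeff_ofMulAction]

/-- The `G`-map `k[G] → Hom_k(V, k[G])` sending `∑ g, x_g g` to `v ↦ ∑ g, φ(g⁻¹ v) x_g g`. -/
noncomputable def matrixCoeffMul (φ : Module.Dual k V) :
    (leftRegular k G).IntertwiningMap (linHom ρ (leftRegular k G)) where
  toFun x :=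
    { toFun v := .ofCoeff ((fun g ↦ φ (ρ g⁻¹ v)) • x.coeff)
      map_add' v w := by ext; simp [add_mul]
      map_smul' c v := by ext; simp [mul_assoc] }
  map_add' x y := by ext; simp
  map_smul' c x := by ext; simp [mul_left_comm]
  isIntertwining' g := by
    refine LinearMap.ext fun x ↦ ?_
    ext v h
    simp [coeff_ofMulAction]

theorem coeff_diagCoeff [Module.Finite k V] (v : V) (f : V →ₗ[k] MonoidAlgebra k G) (g : G) :
    (diagCoeff ρ v f).coeff g = (f (ρ g v)).coeff g :=
  rfl

theorem coeff_matrixCoeffMul (φ : Module.Dual k V) (x : MonoidAlgebra k G) (v : V) (g : G) :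
    (matrixCoeffMul ρ φ x v).coeff g = φ (ρ g⁻¹ v) * x.coeff g :=
  rfl

theorem sum_matrixCoeffMul_comp_diagCoeff {ι : Type*} [Fintype ι] [Module.Finite k V]
    {a : ι → V} {φ : ι → Module.Dual k V} (h : ∀ v, ∑ i, φ i v • a i = v) :
    ∑ i, (matrixCoeffMul ρ (φ i)).comp (diagCoeff ρ (a i)) = .id _ := by
  refine IntertwiningMap.ext (LinearMap.ext fun (f : V →ₗ[k] MonoidAlgebra k G) ↦ ?_)
  ext v g
  rw [IntertwiningMap.toLinearMap_sum]
  calc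
    _ = ∑ i, (matrixCoeffMul ρ (φ i) (diagCoeff ρ (a i) f) v).coeff g := by simp
    _ = (f (ρ g (∑ i, φ i (ρ g⁻¹ v) • a i))).coeff g := by
      simp [coeff_matrixCoeffMul, coeff_diagCoeff]
    _ = (f v).coeff g := by rw [h, self_inv_apply]

theorem exists_sum_dual_smul_eq (k V : Type*) [CommSemiring k] [AddCommMonoid V] [Module k V]
    [Module.Projective k V] [Module.Finite k V] :
    ∃ (n : ℕ) (a : Fin n → V) (φ : Fin n → Module.Dual k V), ∀ v, ∑ i, φ i v • a i = v := by
  obtain ⟨n, s, r, -, -, hsr⟩ := Module.Finite.exists_comp_eq_id_of_projective k V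
  refine ⟨n, fun i ↦ s (Pi.single i 1), fun i ↦ .proj i ∘ₗ r, fun v ↦ ?_⟩
  simpa [← map_smul, ← map_sum, ← Pi.single_smul, Finset.univ_sum_single]
    using LinearMap.congr_fun hsr v

end Untwisting

theorem finite_groupCohomology_ihom_leftRegular {k G : Type u} [CommRing k] [Group G]
    (A : Rep.{u} k G) [Module.Projective k A] [Module.Finite k A] (n : ℕ)
    (h : Module.Finite k (groupCohomology (Rep.leftRegular k G) n)) :
    Module.Finite k (groupCohomology ((ihom A).obj (Rep.leftRegular k G)) n) := by
  obtain ⟨m, a, φ, hφ⟩ := exists_sum_dual_smul_eq k A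
  have retract : ∑ i, Rep.ofHom (diagCoeff A.ρ (a i)) ≫ Rep.ofHom (matrixCoeffMul A.ρ (φ i)) =
      𝟙 ((ihom A).obj (Rep.leftRegular k G)) := by
    simp_rw [← Rep.ofHom_comp, ← Rep.ofHom_sum]
    exact congrArg Rep.ofHom (sum_matrixCoeffMul_comp_diagCoeff A.ρ hφ)
  exact finite_obj_of_sum_comp_eq_id
    (groupCohomology.cochainsFunctor k G ⋙ HomologicalComplex.homologyFunctor _ _ n) retract h

theorem finite_ext_leftRegular {k G : Type u} [CommRing k] [Group G]
    (A : Rep.{u} k G) [Module.Projective k A] [Module.Finite k A] (n : ℕ)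
    (h : Module.Finite k (groupCohomology (Rep.leftRegular k G) n)) :
    Module.Finite k (((Ext k (Rep k G) n).obj (op A)).obj (Rep.leftRegular k G)) :=
  have := finite_groupCohomology_ihom_leftRegular A n h
  finite_of_iso (groupCohomologyIHomIsoExt A (Rep.leftRegular k G) n)

section MonoidAlgebra

instance additive_ofModuleMonoidAlgebra {k G : Type*} [CommRing k] [Monoid G] :
    (Rep.ofModuleMonoidAlgebra (k := k) (G := G)).Additive where
  map_add := rfl

/-- The identity of `A`, as a `k`-linear equivalence onto the representation attached to the
`k[G]`-module `A`. The latter carries the `k`-structure restricted from `k[G]`, not the given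
one. -/
noncomputable def ofModuleMonoidAlgebraLinearEquiv (k G A : Type*) [CommRing k] [Monoid G]
    [AddCommGroup A] [Module k A] [Module (MonoidAlgebra k G) A]
    [IsScalarTower k (MonoidAlgebra k G) A] :
    A ≃ₗ[k] Rep.ofModuleMonoidAlgebra.obj (.of (MonoidAlgebra k G) A) where
  __ := (RestrictScalars.addEquiv k (MonoidAlgebra k G) A).symm
  map_smul' r x := by
    have map_smul := RestrictScalars.addEquiv_symm_map_algebraMap_smul k (MonoidAlgebra k G) A r x
    rwa [algebraMap_smul] at map_smul

/-- Comparison of `Ext^n(A, k[G])` computed in representations with the one computed in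
`k[G]`-modules. -/
noncomputable def extOfModuleMonoidAlgebraIso (k : Type u) {G : Type u} [CommRing k] [Group G]
    [Linear k (ModuleCat.{u} (MonoidAlgebra k G))]
    [(Rep.ofModuleMonoidAlgebra (k := k) (G := G)).Linear k]
    (A : ModuleCat.{u} (MonoidAlgebra k G)) (n : ℕ) :
    ((Ext k (Rep k G) n).obj (op (Rep.ofModuleMonoidAlgebra.obj A))).obj (Rep.leftRegular k G) ≅
      ((Ext k (ModuleCat (MonoidAlgebra k G)) n).obj (op A)).obj (.of _ (MonoidAlgebra k G)) :=
  (extAdjunctionIso k (F := Rep.ofModuleMonoidAlgebra (k := k) (G := G))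
      Rep.equivalenceModuleMonoidAlgebra.symm.toAdjunction n A _).symm ≪≫
    ((Ext k (ModuleCat (MonoidAlgebra k G)) n).obj _).mapIso
      ofMulActionSelfAsModuleEquiv.toModuleIso

end MonoidAlgebra

/- Unlike `Functor.intLinear`, this applies to `ℤ`-linear structures that are not definitionally
`preadditiveIntLinear`, such as the one on `Rep ℤ G`. -/
instance linear_int_of_additive {C D : Type*} [Category* C] [Category* D] [Preadditive C]
    [Preadditive D] {_ : Linear ℤ C} {_ : Linear ℤ D} (F : C ⥤ D) [F.Additive] :
    F.Linear ℤ where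
  map_smul f r :=
    (congrArg F.map (int_smul_eq_zsmul _ r f)).trans <|
      F.map_zsmul.trans (int_smul_eq_zsmul _ r (F.map f)).symm

theorem addGroup_fg_iff_finite_int {M : Type*} [AddCommGroup M] [Module ℤ M] :
    AddGroup.FG M ↔ Module.Finite ℤ M := by
  rw [← Module.Finite.iff_addGroup_fg]
  convert Iff.rfl
  exact Subsingleton.elim _ _

theorem stmt0_general {k G : Type u} [CommRing k] [Group G]
    [Linear k (ModuleCat.{u} (MonoidAlgebra k G))]
    [(Rep.ofModuleMonoidAlgebra (k := k) (G := G)).Linear k] (n : ℕ)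
    (h : Module.Finite k (groupCohomology (Rep.leftRegular k G) n))
    (A : Type u) [AddCommGroup A] [Module k A] [Module (MonoidAlgebra k G) A]
    [IsScalarTower k (MonoidAlgebra k G) A] [Module.Projective k A] [Module.Finite k A] :
    Module.Finite k (((Ext k (ModuleCat (MonoidAlgebra k G)) n).obj (op (.of _ A))).obj
      (.of _ (MonoidAlgebra k G))) :=
  let e := ofModuleMonoidAlgebraLinearEquiv k G A
  have := Module.Projective.of_equiv e
  have := Module.Finite.equiv e
  have := finite_ext_leftRegular (Rep.ofModuleMonoidAlgebra.obj (.of (MonoidAlgebra k G) A)) n h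
  finite_of_iso (extOfModuleMonoidAlgebraIso k (.of _ A) n)

/-- If `H^i(G, ℤG)` is a finitely generated abelian group and `A` is a `ℤG`-module whose
underlying abelian group is finitely generated and free, then `Ext^i_{ℤG}(A, ℤG)` is a
finitely generated abelian group. -/
theorem stmt0 (G : Type) [Group G] (i : ℕ)
    (hG : AddGroup.FG (groupCohomology (Rep.ofMulAction ℤ G G) i))
    (A : Type) [AddCommGroup A] [Module (MonoidAlgebra ℤ G) A]
    [Module.Free ℤ A] [Module.Finite ℤ A] :
    AddGroup.FG (extZG G i A) :=
  addGroup_fg_iff_finite_int.2 (stmt0_general i (addGroup_fg_iff_finite_int.1 hG) A)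
end

section
/- Let H be a subgroup of finite index in a group G. Then for every integer i, the isomorphism Hom_{ZH}(ZG, ZH) ≅ ZG of ZG-modules together with the Eckmann–Shapiro lemma yields: H^i(G, ZG) is finitely generated as an abelian group if and only if H^i(H, ZH) is finitely generated as an abelian group. -/
/-!
A morphism out of the regular representation is determined by the image of `1`, which may be
arbitrary. Combined with the adjunction between induction and restriction, this shows that
`Ind_φ k[G]` has the universal property of `k[H]` for every homomorphism `φ : G →* H`. For a
subgroup of finite index, induction agrees with coinduction, so `Coind_H^G k[H] ≅ k[G]`, and
Shapiro's lemma identifies `Hⁱ(G, k[G])` with `Hⁱ(H, k[H])`.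
-/

open CategoryTheory Representation

universe u v

-- `Module.Finite.iff_addGroup_fg` is stated only for the action by integer multiples, whereas an
-- object of `ModuleCat ℤ` carries an arbitrary instance.
theorem module_finite_int_iff_addGroup_fg {M : Type*} [AddCommGroup M] [inst : Module ℤ M] :
    Module.Finite ℤ M ↔ AddGroup.FG M := by
  obtain rfl : inst = AddCommGroup.toIntModule M := Subsingleton.elim _ _
  exact Module.Finite.iff_addGroup_fg

theorem leftRegular_hom_ext {k : Type u} {G : Type v} [CommRing k] [Monoid G]
    {A : Rep.{max u v} k G} {f g : Rep.leftRegular k G ⟶ A}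
    (h : f.hom (MonoidAlgebra.single 1 1) = g.hom (MonoidAlgebra.single 1 1)) : f = g :=
  (Rep.leftRegularHomEquiv A).injective h

/-- Induction along any group homomorphism `φ : G →* H` takes the regular representation `k[G]` to
the regular representation `k[H]`; the class of `1 ⊗ 1` corresponds to `1`. -/
noncomputable def indLeftRegularIso (k : Type u) {G H : Type v} [CommRing k] [Group G] [Group H]
    (φ : G →* H) : Rep.ind φ (Rep.leftRegular k G) ≅ Rep.leftRegular k H where
  hom := (Rep.indResHomEquiv.{v} φ (Rep.leftRegular k G) (Rep.leftRegular k H)).symm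
    (Rep.leftRegularHom (Rep.res φ (Rep.leftRegular k H)) (MonoidAlgebra.single 1 1))
  inv := Rep.leftRegularHom _ (IndV.mk φ _ 1 (MonoidAlgebra.single 1 1))
  hom_inv_id := by
    apply (Rep.indResHomEquiv.{v} φ _ _).injective
    apply leftRegular_hom_ext
    simp
  inv_hom_id := by
    apply leftRegular_hom_ext
    simp

open scoped Classical in
/-- The isomorphism `Hom_{k[H]}(k[G], k[H]) ≅ k[G]` of `k[G]`-modules for a subgroup `H ≤ G` of
finite index, the left-hand side being the coinduced representation of `k[H]`. -/
noncomputable def coindLeftRegularIso (k : Type u) {G : Type v} [CommRing k] [Group G]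
    (H : Subgroup G) [H.FiniteIndex] :
    Rep.coind H.subtype (Rep.leftRegular k H) ≅ Rep.leftRegular k G :=
  (Rep.indCoindIso.{v} (Rep.leftRegular k H)).symm ≪≫ indLeftRegularIso k H.subtype

/-- The isomorphism `Hⁱ(G, k[G]) ≅ Hⁱ(H, k[H])` for a subgroup `H ≤ G` of finite index, obtained
from Shapiro's lemma. -/
noncomputable def groupCohomologyLeftRegularIso (k : Type u) {G : Type u} [CommRing k] [Group G]
    (H : Subgroup G) [H.FiniteIndex] (i : ℕ) :
    groupCohomology (Rep.leftRegular k G) i ≅ groupCohomology (Rep.leftRegular k H) i :=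
  (groupCohomology.functor k G i).mapIso (coindLeftRegularIso k H).symm ≪≫
    groupCohomology.coindIso (Rep.leftRegular k H) i

theorem stmt4_general (k : Type u) {G : Type u} [CommRing k] [Group G]
    (H : Subgroup G) [H.FiniteIndex] (i : ℕ) :
    Module.Finite k (groupCohomology (Rep.leftRegular k G) i) ↔
      Module.Finite k (groupCohomology (Rep.leftRegular k H) i) :=
  Module.Finite.equiv_iff (groupCohomologyLeftRegularIso k H i).toLinearEquiv

/-- If `H` is a finite-index subgroup of `G`, then for every `i`, the group cohomology
`H^i(G, ℤG)` is finitely generated as an abelian group if and only if `H^i(H, ℤH)` is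
finitely generated as an abelian group.  Here the group ring is the left regular
representation `Rep.ofMulAction ℤ G G`. -/
theorem stmt4 (G : Type) [Group G] (H : Subgroup G) [H.FiniteIndex] (i : ℕ) :
    AddGroup.FG (groupCohomology (Rep.ofMulAction ℤ G G) i) ↔
    AddGroup.FG (groupCohomology (Rep.ofMulAction ℤ H H) i) := by
  rw [← module_finite_int_iff_addGroup_fg, ← module_finite_int_iff_addGroup_fg]
  exact stmt4_general ℤ H i
end

section
/- Let G be a group and i an integer such that H^i(G, ZG) and H^{i-1}(G, ZG) are both finitely generated abelian groups. Let A be a ZG-module whose underlying abelian group is finitely generated. Then Ext^i_{ZG}(A, ZG) is a finitely generated abelian group. -/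
/-!
The sequence `0 → T → A → A/T → 0` with `T` the torsion of `A` reduces to the finite
module `T` and the lattice `A/T`; a finite `T` is a quotient of the lattice `k[T]` by a sublattice,
so the long exact sequence reduces `Extⁱ(T, kG)` to `Extⁱ` and `Extⁱ⁻¹` of lattices. For a lattice
`L`, tensoring with `L` is exact, preserves projectives and is left adjoint to `Hom(L, -)`, so
`Ext(L, kG) = Ext(L ⊗ k, kG) = Ext(k, Hom(L, kG))`. Finally `Hom(L, kG)` untwists: a basis of `L`
exhibits it as a retract of a finite power of `kG`, and `Ext(k, kG)` is the cohomology of `G`.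
-/

open CategoryTheory Opposite

section Noetherian

variable {R M N P : Type*} [CommRing R] [IsNoetherianRing R] [AddCommGroup M] [AddCommGroup N]
  [AddCommGroup P] [Module R M] [Module R N] [Module R P]

lemma finite_of_exact [Module.Finite R M] [Module.Finite R P] {f : M →ₗ[R] N} {g : N →ₗ[R] P}
    (h : Function.Exact f g) : Module.Finite R N :=
  have := isNoetherian_of_range_eq_ker f g h.linearMap_ker_eq.symm
  inferInstance

end Noetherian

section AbelianExt

universe w w' v v' u u'

variable {C : Type u} [Category.{v} C] [Abelian C] [HasExt.{w} C] (R : Type*) [CommRing R]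
  [Linear R C]

section LongExactSequence

variable [IsNoetherianRing R] {S : ShortComplex C} (hS : S.ShortExact) (Y : C) (n : ℕ)
include hS

lemma finite_ext_X₂ [Module.Finite R (Abelian.Ext.{w} S.X₁ Y n)]
    [Module.Finite R (Abelian.Ext.{w} S.X₃ Y n)] : Module.Finite R (Abelian.Ext.{w} S.X₂ Y n) :=
  finite_of_exact (f := (Abelian.Ext.mk₀ S.g).precompOfLinear R Y (zero_add n))
    (g := (Abelian.Ext.mk₀ S.f).precompOfLinear R Y (zero_add n))
    ((ShortComplex.ab_exact_iff_function_exact _).1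
      (Abelian.Ext.contravariant_sequence_exact₂' hS Y n))

lemma finite_ext_X₃ [Module.Finite R (Abelian.Ext.{w} S.X₁ Y (n - 1))]
    [Module.Finite R (Abelian.Ext.{w} S.X₂ Y n)] : Module.Finite R (Abelian.Ext.{w} S.X₃ Y n) := by
  cases n with
  | zero =>
    have := hS.epi_g
    exact .of_injective ((Abelian.Ext.mk₀ S.g).precompOfLinear R Y (zero_add 0))
      (Abelian.Ext.precomp_mk₀_injective_of_epi Y S.g)
  | succ n =>
    rw [Nat.add_sub_cancel] at *
    exact finite_of_exact (f := hS.extClass.precompOfLinear R Y (add_comm 1 n))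
      (g := (Abelian.Ext.mk₀ S.g).precompOfLinear R Y (zero_add (n + 1)))
      ((ShortComplex.ab_exact_iff_function_exact _).1
        (Abelian.Ext.contravariant_sequence_exact₃' hS Y n (n + 1) (add_comm 1 n)))

end LongExactSequence

lemma finite_ext_of_sum_comp_eq_id {ι : Type*} [Fintype ι] (X : C) {Y Y' : C}
    {p : ι → (Y ⟶ Y')} {s : ι → (Y' ⟶ Y)} (h : ∑ j, s j ≫ p j = 𝟙 Y') (n : ℕ)
    [Module.Finite R (Abelian.Ext.{w} X Y n)] : Module.Finite R (Abelian.Ext.{w} X Y' n) := by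
  refine .of_surjective (∑ j, (Abelian.Ext.mk₀ (p j)).postcompOfLinear R X (add_zero n) ∘ₗ
    LinearMap.proj (φ := fun _ : ι ↦ Abelian.Ext.{w} X Y n) j)
    fun x ↦ ⟨fun j ↦ x.comp (Abelian.Ext.mk₀ (s j)) (add_zero n), ?_⟩
  calc _ = ∑ j, x.comp (Abelian.Ext.mk₀ (s j ≫ p j)) (add_zero n) := by
        simp
    _ = x.comp (Abelian.Ext.mk₀ (∑ j, s j ≫ p j)) (add_zero n) := by
        rw [Abelian.Ext.mk₀_sum, Abelian.Ext.comp_sum]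
    _ = x := by rw [h, Abelian.Ext.comp_mk₀_id]

lemma finite_ext_of_iso_left {X X' : C} (e : X ≅ X') (Y : C) (n : ℕ)
    [Module.Finite R (Abelian.Ext.{w} X Y n)] : Module.Finite R (Abelian.Ext.{w} X' Y n) :=
  .of_surjective ((Abelian.Ext.mk₀ e.inv).precompOfLinear R Y (zero_add n))
    fun x ↦ ⟨(Abelian.Ext.mk₀ e.hom).comp x (zero_add n), by simp⟩

section Adjunction

variable {D : Type u'} [Category.{v'} D] [Abelian D] [HasExt.{w'} D] [Linear R D]
  {F : C ⥤ D} {U : D ⥤ C} (adj : F ⊣ U) [F.Additive] [F.Linear R]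
  [Limits.PreservesFiniteLimits F] [Limits.PreservesFiniteColimits F]

/-- The map `Ext C X (U Y) n → Ext D (F X) Y n` of an adjunction `F ⊣ U` with `F` exact: apply `F`,
then compose with the counit. -/
noncomputable def adjunctionExtMap (X : C) (Y : D) (n : ℕ) :
    Abelian.Ext.{w} X (U.obj Y) n →ₗ[R] Abelian.Ext.{w'} (F.obj X) Y n :=
  (Abelian.Ext.mk₀ (adj.counit.app Y)).postcompOfLinear R (F.obj X) (add_zero n) ∘ₗ
    F.mapExtLinearMap R X (U.obj Y) n

lemma adjunctionExtMap_apply {X : C} {Y : D} {n : ℕ} (e : Abelian.Ext.{w} X (U.obj Y) n) :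
    adjunctionExtMap.{w, w'} R adj X Y n e =
      (e.mapExactFunctor F).comp (Abelian.Ext.mk₀ (adj.counit.app Y)) (add_zero n) := rfl

lemma adjunctionExtMap_mk₀ {X : C} {Y : D} (f : X ⟶ U.obj Y) :
    adjunctionExtMap.{w, w'} R adj X Y 0 (Abelian.Ext.mk₀ f) =
      Abelian.Ext.mk₀ ((adj.homEquiv X Y).symm f) := by
  simp [adjunctionExtMap_apply, Abelian.Ext.mapExactFunctor_mk₀, Adjunction.homEquiv_counit]

lemma adjunctionExtMap_comp {X X' : C} {Y : D} {a b n : ℕ} (e : Abelian.Ext.{w} X X' a)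
    (e' : Abelian.Ext.{w} X' (U.obj Y) b) (h : a + b = n) :
    adjunctionExtMap.{w, w'} R adj X Y n (e.comp e' h) =
      (e.mapExactFunctor F).comp (adjunctionExtMap.{w, w'} R adj X' Y b e') h := by
  simp [adjunctionExtMap_apply, Abelian.Ext.mapExactFunctor_comp]

attribute [local instance] Abelian.Ext.subsingleton_of_projective in
lemma adjunctionExtMap_succ_bijective {S : ShortComplex C} (hS : S.ShortExact) [Projective S.X₂]
    [Projective (F.obj S.X₂)] (Y : D) {n : ℕ}
    (h₁ : Function.Bijective (adjunctionExtMap.{w, w'} R adj S.X₁ Y n))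
    (h₂ : Function.Surjective (adjunctionExtMap.{w, w'} R adj S.X₂ Y n)) :
    Function.Bijective (adjunctionExtMap.{w, w'} R adj S.X₃ Y (n + 1)) := by
  have : Projective (S.map F).X₂ := ‹Projective (F.obj S.X₂)›
  have map_comp_f (e : Abelian.Ext.{w} S.X₂ (U.obj Y) n) :
      (Abelian.Ext.mk₀ (S.map F).f).comp (adjunctionExtMap.{w, w'} R adj S.X₂ Y n e) (zero_add n) =
        adjunctionExtMap.{w, w'} R adj S.X₁ Y n ((Abelian.Ext.mk₀ S.f).comp e (zero_add n)) := by
    rw [adjunctionExtMap_comp, Abelian.Ext.mapExactFunctor_mk₀]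
    rfl
  have map_comp_extClass (e : Abelian.Ext.{w} S.X₁ (U.obj Y) n) :
      (hS.map_of_exact F).extClass.comp (adjunctionExtMap.{w, w'} R adj S.X₁ Y n e) (add_comm 1 n) =
        adjunctionExtMap.{w, w'} R adj S.X₃ Y (n + 1) (hS.extClass.comp e (add_comm 1 n)) := by
    rw [adjunctionExtMap_comp, Abelian.Ext.mapExactFunctor_extClass]
    rfl
  exact AddMonoidHom.bijective_of_surjective_of_bijective_of_right_exact _ _ _ _
    (adjunctionExtMap.{w, w'} R adj S.X₂ Y n).toAddMonoidHom
    (adjunctionExtMap.{w, w'} R adj S.X₁ Y n).toAddMonoidHom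
    (adjunctionExtMap.{w, w'} R adj S.X₃ Y (n + 1)).toAddMonoidHom
    (AddMonoidHom.ext map_comp_f) (AddMonoidHom.ext map_comp_extClass)
    ((ShortComplex.ab_exact_iff_function_exact _).1
      (Abelian.Ext.contravariant_sequence_exact₁' hS (U.obj Y) n (n + 1) (add_comm 1 n)))
    ((ShortComplex.ab_exact_iff_function_exact _).1
      (Abelian.Ext.contravariant_sequence_exact₁' (hS.map_of_exact F) Y n (n + 1) (add_comm 1 n)))
    h₂ h₁
    (fun x ↦ Abelian.Ext.contravariant_sequence_exact₃ hS _ x (by subsingleton) (add_comm 1 n))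
    (fun y ↦ Abelian.Ext.contravariant_sequence_exact₃ (hS.map_of_exact F) _ y (by subsingleton)
      (add_comm 1 n))

lemma adjunctionExtMap_bijective [EnoughProjectives C] [F.PreservesProjectiveObjects]
    (X : C) (Y : D) (n : ℕ) : Function.Bijective (adjunctionExtMap.{w, w'} R adj X Y n) := by
  induction n generalizing X with
  | zero =>
    rw [← Function.Bijective.of_comp_iff _ (Abelian.Ext.mk₀_bijective X (U.obj Y))]
    convert (Abelian.Ext.mk₀_bijective (F.obj X) Y).comp (adj.homEquiv X Y).symm.bijective
    exact funext (adjunctionExtMap_mk₀ R adj)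
  | succ n ih =>
    let P : ProjectivePresentation X := Classical.arbitrary _
    exact adjunctionExtMap_succ_bijective R adj
      (S := ShortComplex.mk _ _ (Limits.kernel.condition P.f))
      { exact := ShortComplex.exact_kernel P.f } Y (ih _) (ih _).surjective

end Adjunction

end AbelianExt

section ProjectiveResolution

universe w v u

variable {C : Type u} [Category.{v} C] [Abelian C] [HasExt.{w} C] {X : C}
  (P : ProjectiveResolution X) (R : Type*) [CommRing R] [Linear R C] (Y : C) (n : ℕ)

open ProjectiveResolution CochainComplex HomComplex in
lemma extMk_zero_eq_zero_iff {Y : C} (f : P.complex.X 0 ⟶ Y) (hf : P.complex.d 1 0 ≫ f = 0) :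
    P.extMk f 1 rfl hf = (0 : Abelian.Ext.{w} X Y 0) ↔ f = 0 := by
  refine ⟨fun h ↦ ?_, fun h ↦ by subst h; exact P.extMk_zero 1 rfl⟩
  rw [← P.extEquivCohomologyClass.apply_eq_iff_eq, extEquivCohomologyClass_extMk,
    extEquivCohomologyClass_zero, CohomologyClass.mk_eq_zero_iff,
    Cocycle.toSingleMk_mem_coboundaries_iff _ _ _ _ _ 1 (by simp)] at h
  obtain ⟨g, hg⟩ := h
  have h0 : Limits.IsZero (P.cochainComplex.X 1) :=
    P.cochainComplex.isZero_of_isStrictlyLE 0 1 (by simp)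
  rw [h0.eq_of_src g 0, Limits.comp_zero] at hg
  exact (cancel_epi (P.cochainComplexXIso (-((0 : ℕ) : ℤ)) 0 rfl).hom).1
    (hg.symm.trans Limits.comp_zero.symm)

variable {Y n} in
lemma smul_extMk (r : R) (f : P.complex.X n ⟶ Y) (m : ℕ) (hm : n + 1 = m)
    (hf : P.complex.d m n ≫ f = 0) :
    r • (P.extMk f m hm hf : Abelian.Ext.{w} X Y n) =
      P.extMk (r • f) m hm (by rw [Linear.comp_smul, hf, smul_zero]) := by
  simp only [Abelian.Ext.smul_eq_comp_mk₀, P.extMk_comp_mk₀, Linear.comp_smul, Category.comp_id]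

/-- The piece `Hom(Pₙ₋₁, Y) ⟶ Hom(Pₙ, Y) ⟶ Hom(Pₙ₊₁, Y)` of the cochain complex `Hom(P, Y)`. For
`n = 0` the first map is the zero endomorphism of `Hom(P₀, Y)`. -/
noncomputable abbrev homShortComplex : ShortComplex (ModuleCat.{v} R) :=
  (P.complex.linearYonedaObj R Y).sc' ((ComplexShape.up ℕ).prev n) n (n + 1)

/-- The class in `Abelian.Ext X Y n` of an `n`-cocycle of `Hom(P, Y)`, for a projective resolution
`P` of `X`. -/
noncomputable def cocycleToExt :
    LinearMap.ker (homShortComplex P R Y n).g.hom →ₗ[R] Abelian.Ext.{w} X Y n where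
  toFun f := P.extMk f.1 (n + 1) rfl f.2
  map_add' f g := (P.add_extMk f.1 g.1 (n + 1) rfl f.2 g.2).symm
  map_smul' r f := (smul_extMk P R r f.1 (n + 1) rfl f.2).symm

lemma cocycleToExt_surjective : Function.Surjective (cocycleToExt.{w} P R Y n) := fun x ↦
  let ⟨f, hf, h⟩ := P.extMk_surjective x (n + 1) rfl
  ⟨⟨f, hf⟩, h⟩

lemma ker_cocycleToExt :
    LinearMap.ker (cocycleToExt.{w} P R Y n) =
      LinearMap.range (homShortComplex P R Y n).moduleCatToCycles := by
  ext ⟨f, hf⟩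
  have mem_range : ⟨f, hf⟩ ∈ LinearMap.range (homShortComplex P R Y n).moduleCatToCycles ↔
      ∃ g : P.complex.X ((ComplexShape.up ℕ).prev n) ⟶ Y, P.complex.d n _ ≫ g = f :=
    exists_congr fun g ↦ Subtype.ext_iff
  rw [mem_range]
  cases n with
  | zero =>
    refine (extMk_zero_eq_zero_iff P f hf).trans ?_
    simpa using eq_comm
  | succ n =>
    rw [CochainComplex.prev_nat_succ]
    exact P.extMk_eq_zero_iff f (n + 2) rfl hf n rfl

/-- `Ext`, defined by left derived functors, agrees with `Abelian.Ext`, defined in the derived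
category. -/
noncomputable def extLinearEquiv [EnoughProjectives C] (X : C) :
    ((Ext R C n).obj (op X)).obj Y ≃ₗ[R] Abelian.Ext.{w} X Y n :=
  let P := ProjectiveResolution.of X
  (P.isoExt n Y ≪≫ ShortComplex.homologyMapIso
    ((P.complex.linearYonedaObj R Y).isoSc' _ n (n + 1) rfl (by simp)) ≪≫
    (homShortComplex P R Y n).moduleCatHomologyIso).toLinearEquiv ≪≫ₗ
  Submodule.quotEquivOfEq _ _ (ker_cocycleToExt.{w} P R Y n).symm ≪≫ₗ
  (cocycleToExt.{w} P R Y n).quotKerEquivOfSurjective (cocycleToExt_surjective P R Y n)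

end ProjectiveResolution

section Untwisting

variable {k G V : Type*} [CommRing k] [AddCommGroup V] [Module k V]

lemma finite_setOf_coeff_ne_zero [Module.Finite k V] (F : V →ₗ[k] MonoidAlgebra k G) :
    {g | ∃ v, (F v).coeff g ≠ 0}.Finite := by
  obtain ⟨s, hs⟩ := Module.Finite.fg_top (R := k) (M := V)
  refine (s.finite_toSet.biUnion fun v _ ↦ (F v).coeff.hasFiniteSupport).subset fun g ⟨v, hv⟩ ↦ ?_
  by_contra h
  have coeff_eq_zero :
      Finsupp.lapply g ∘ₗ (MonoidAlgebra.coeffLinearEquiv k).toLinearMap ∘ₗ F = 0 :=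
    LinearMap.ext_on hs fun w hw ↦ by
      by_contra hgw
      exact h (Set.mem_biUnion hw hgw)
  exact hv (LinearMap.congr_fun coeff_eq_zero v)

variable [Group G] (ρ : Representation k G V)

/-- The `G`-map `k[G] → Hom(V, k[G])` that sends `g` to `v ↦ c (g⁻¹ v) g`. -/
noncomputable def twist (c : Module.Dual k V) :
    (Representation.leftRegular k G).IntertwiningMap
      (ρ.linHom (Representation.leftRegular k G)) :=
  (Representation.leftRegularMapEquiv (ρ.linHom (Representation.leftRegular k G))).symm
    (LinearMap.toSpanSingleton k _ (MonoidAlgebra.single 1 1) ∘ₗ c)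

lemma coeff_twist_apply (c : Module.Dual k V) (x : MonoidAlgebra k G) (v : V) (g : G) :
    (twist ρ c x v).coeff g = c (ρ g⁻¹ v) * x.coeff g := by
  induction x using MonoidAlgebra.induction_linear with
  | zero => simp
  | add x y hx hy => simp [mul_add, hx, hy]
  | single h r =>
    obtain rfl | hg := eq_or_ne h g
    · simp [twist, Representation.leftRegularMapEquiv, mul_comm]
    · simp [twist, Representation.leftRegularMapEquiv, hg]

variable [Module.Finite k V]

/-- The `G`-map `Hom(V, k[G]) → k[G]` that sends `F` to `∑ g, (F (g v))_g g`. -/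
noncomputable def untwist (v : V) :
    (ρ.linHom (Representation.leftRegular k G)).IntertwiningMap
      (Representation.leftRegular k G) where
  toFun F := MonoidAlgebra.ofCoeff <| Finsupp.ofSupportFinite (fun g ↦ (F (ρ g v)).coeff g) <|
    (finite_setOf_coeff_ne_zero F).subset fun g hg ↦ ⟨ρ g v, hg⟩
  map_add' F F' := by ext g; rfl
  map_smul' r F := by ext g; rfl
  isIntertwining' h := by
    ext F g
    simp [Representation.coeff_ofMulAction, Finsupp.ofSupportFinite_coe]

lemma coeff_untwist_apply (v : V) (F : V →ₗ[k] MonoidAlgebra k G) (g : G) :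
    (untwist ρ v F).coeff g = (F (ρ g v)).coeff g := rfl

lemma sum_twist_untwist {ι : Type*} [Fintype ι] (b : Module.Basis ι k V)
    (F : V →ₗ[k] MonoidAlgebra k G) :
    ∑ j, twist ρ (b.coord j) (untwist ρ (b j) F) = F := by
  ext v g
  have v_eq_sum : v = ∑ j, b.coord j (ρ g⁻¹ v) • ρ g (b j) :=
    calc v = ρ g (ρ g⁻¹ v) := (ρ.self_inv_apply g v).symm
      _ = ρ g (∑ j, b.coord j (ρ g⁻¹ v) • b j) := congrArg (ρ g) (b.sum_repr _).symm
      _ = _ := by simp only [map_sum, map_smul]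
  conv_rhs => rw [v_eq_sum]
  simp [MonoidAlgebra.coeff_sum, coeff_twist_apply, coeff_untwist_apply]

end Untwisting

section Permutation

variable {k G V : Type*} [CommRing k] [Group G] [AddCommGroup V] [Module k V]
  (ρ : Representation k G V)

/-- The permutation representation `k[V]` on the set of elements of `V`. -/
noncomputable def permutationRepresentation : Representation k G (V →₀ k) where
  toFun g := Finsupp.lmapDomain k k (ρ g)
  map_one' := by ext; simp
  map_mul' g h := by ext; simp

/-- The `G`-map `k[V] → V` that sends each basis vector to the element of `V` it stands for. -/
noncomputable def permutationCounit : (permutationRepresentation ρ).IntertwiningMap ρ :=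
  ⟨Finsupp.linearCombination k id, fun g ↦ by ext; simp [permutationRepresentation]⟩

lemma permutationCounit_surjective : Function.Surjective (permutationCounit ρ) :=
  Finsupp.linearCombination_surjective k Function.surjective_id

end Permutation

lemma torsion_le_comap {R M N : Type*} [CommRing R] [AddCommGroup M] [AddCommGroup N] [Module R M]
    [Module R N] (f : M →ₗ[R] N) : Submodule.torsion R M ≤ (Submodule.torsion R N).comap f := by
  rintro x ⟨a, ha⟩
  exact ⟨a, by rw [← f.map_smul_of_tower, ha, map_zero]⟩

section Rep

universe u

open MonoidalCategory

variable {k G : Type u} [CommRing k] [Group G] (L : Rep.{u} k G)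

lemma preservesFiniteColimits_tensorLeft : Limits.PreservesFiniteColimits (tensorLeft L) :=
  have := (ihom.adjunction L).leftAdjoint_preservesColimits
  inferInstance

lemma preservesFiniteLimits_tensorLeft [Module.Flat k L.V] :
    Limits.PreservesFiniteLimits (tensorLeft L) := by
  have : (tensorLeft L).PreservesMonomorphisms := ⟨fun {X Y} f hf ↦ by
    rw [Rep.mono_iff_injective] at hf ⊢
    exact Module.Flat.lTensor_preserves_injective_linearMap (M := L.V) f.hom.toLinearMap hf⟩
  have := preservesFiniteColimits_tensorLeft L
  have := (tensorLeft L).preservesHomology_of_preservesMonos_and_cokernels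
  exact (tensorLeft L).preservesFiniteLimits_of_preservesHomology

lemma preservesProjectiveObjects_tensorLeft [Module.Projective k L.V] :
    (tensorLeft L).PreservesProjectiveObjects := by
  have : (ihom L).PreservesEpimorphisms := ⟨fun {X Y} f hf ↦ by
    rw [Rep.epi_iff_surjective] at hf ⊢
    intro (φ : L.V →ₗ[k] Y.V)
    exact Module.projective_lifting_property f.hom.toLinearMap φ hf⟩
  exact Functor.preservesProjectiveObjects_of_adjunction_of_preservesEpimorphisms
    (ihom.adjunction L)

variable {L} in
lemma sum_untwist_comp_twist {ι : Type*} [Fintype ι] [Module.Finite k L.V]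
    (b : Module.Basis ι k L.V) :
    ∑ j, Rep.ofHom (untwist L.ρ (b j)) ≫ Rep.ofHom (twist L.ρ (b.coord j)) =
      𝟙 ((ihom L).obj (Rep.leftRegular k G)) := by
  refine Rep.hom_ext (Representation.IntertwiningMap.ext (LinearMap.ext fun F ↦ ?_))
  rw [Rep.sum_hom, Representation.IntertwiningMap.toLinearMap_sum, LinearMap.sum_apply]
  exact sum_twist_untwist L.ρ b F

variable [HasExt.{u} (Rep.{u} k G)] (n : ℕ)

lemma finite_ext_trivial (A : Rep.{u} k G) [Module.Finite k (groupCohomology A n)] :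
    Module.Finite k (Abelian.Ext.{u} (𝟙_ (Rep.{u} k G)) A n) :=
  .equiv ((groupCohomologyIsoExt A n).toLinearEquiv ≪≫ₗ extLinearEquiv.{u} k A n _)

variable [Module.Finite k (Abelian.Ext.{u} (𝟙_ (Rep.{u} k G)) (Rep.leftRegular k G) n)]

lemma finite_ext_leftRegular_of_free [Module.Free k L.V] [Module.Finite k L.V] :
    Module.Finite k (Abelian.Ext.{u} L (Rep.leftRegular k G) n) := by
  have := preservesFiniteColimits_tensorLeft L
  have := preservesFiniteLimits_tensorLeft L
  have := preservesProjectiveObjects_tensorLeft L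
  have finite_ext_ihom :
      Module.Finite k (Abelian.Ext.{u} (𝟙_ _) ((ihom L).obj (Rep.leftRegular k G)) n) :=
    finite_ext_of_sum_comp_eq_id k _ (sum_untwist_comp_twist (Module.Free.chooseBasis k L.V)) n
  have finite_ext_tensor :
      Module.Finite k (Abelian.Ext.{u} (L ⊗ 𝟙_ _) (Rep.leftRegular k G) n) :=
    .of_surjective _ (adjunctionExtMap_bijective k (ihom.adjunction L) _ _ n).surjective
  exact finite_ext_of_iso_left k (ρ_ L) _ n

variable [IsDomain k] [IsPrincipalIdealRing k]
  [Module.Finite k (Abelian.Ext.{u} (𝟙_ (Rep.{u} k G)) (Rep.leftRegular k G) (n - 1))]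

variable {L} in
lemma finite_ext_leftRegular_of_epi {T : Rep.{u} k G} (p : L ⟶ T) [Epi p] [Module.Free k L.V]
    [Module.Finite k L.V] : Module.Finite k (Abelian.Ext.{u} T (Rep.leftRegular k G) n) := by
  let ι := (Limits.kernel.ι p).hom.toLinearMap
  have ι_injective : Function.Injective ι := (Rep.mono_iff_injective _).1 inferInstance
  have : Module.Finite k (Limits.kernel p).V := .of_injective ι ι_injective
  have : Module.Free k (Limits.kernel p).V := .of_equiv (LinearEquiv.ofInjective ι ι_injective).symm
  have := finite_ext_leftRegular_of_free (Limits.kernel p) (n - 1)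
  have := finite_ext_leftRegular_of_free L n
  exact finite_ext_X₃ k (S := ShortComplex.mk _ _ (Limits.kernel.condition p))
    { exact := ShortComplex.exact_kernel p } _ n

lemma finite_ext_leftRegular_of_finite (T : Rep.{u} k G) [Finite T.V] :
    Module.Finite k (Abelian.Ext.{u} T (Rep.leftRegular k G) n) := by
  have := (Rep.epi_iff_surjective (Rep.ofHom (permutationCounit T.ρ))).2
    (permutationCounit_surjective T.ρ)
  exact finite_ext_leftRegular_of_epi n (Rep.ofHom (permutationCounit T.ρ))

lemma finite_ext_leftRegular_s6 (A : Rep.{u} k G) [Module.Finite k A.V]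
    [Finite (Submodule.torsion k A.V)] :
    Module.Finite k (Abelian.Ext.{u} A (Rep.leftRegular k G) n) := by
  let q : A ⟶ A.quotient (Submodule.torsion k A.V) fun g ↦ torsion_le_comap (A.ρ g) := A.mkQ _ _
  have : Epi q := (Rep.epi_iff_surjective q).2 (Submodule.mkQ_surjective _)
  let ι := Limits.kernel.ι q
  have ι_mem_torsion (x : (Limits.kernel q).V) : ι.hom x ∈ Submodule.torsion k A.V := by
    rw [← Submodule.Quotient.mk_eq_zero]
    exact congrArg (fun f ↦ f.hom x) (Limits.kernel.condition q)
  have : Finite (Limits.kernel q).V :=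
    .of_injective (fun x ↦ (⟨_, ι_mem_torsion x⟩ : Submodule.torsion k A.V)) fun x y h ↦
      (Rep.mono_iff_injective ι).1 inferInstance (congrArg Subtype.val h)
  have := finite_ext_leftRegular_of_finite n (Limits.kernel q)
  have := finite_ext_leftRegular_of_free (A.quotient _ fun g ↦ torsion_le_comap (A.ρ g)) n
  exact finite_ext_X₂ k (S := ShortComplex.mk _ _ (Limits.kernel.condition q))
    { exact := ShortComplex.exact_kernel q } _ n

end Rep

section Integers

lemma linear_int_of_additive_s6 {C D : Type*} [Category* C] [Category* D] [Preadditive C]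
    [Preadditive D] [Linear ℤ C] [Linear ℤ D] (F : C ⥤ D) [F.Additive] : F.Linear ℤ where
  map_smul f r := (congrArg F.map (int_smul_eq_zsmul _ r f)).trans
    (F.map_zsmul.trans (int_smul_eq_zsmul _ r _).symm)

lemma moduleFinite_int_iff {M : Type*} [AddCommGroup M] {inst : Module ℤ M} :
    Module.Finite ℤ M ↔ AddGroup.FG M := by
  obtain rfl := Subsingleton.elim inst (AddCommGroup.toIntModule M)
  exact Module.Finite.iff_addGroup_fg

lemma finite_torsion_int {M : Type*} [AddCommGroup M] {inst : Module ℤ M} (h : AddGroup.FG M) :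
    Finite (Submodule.torsion ℤ M) := by
  obtain rfl := Subsingleton.elim inst (AddCommGroup.toIntModule M)
  have : Module.Finite ℤ M := moduleFinite_int_iff.2 h
  exact Module.finite_of_fg_torsion _ Submodule.torsion_isTorsion

variable (G : Type) [Group G] (i : ℕ) (A : Type) [AddCommGroup A] [Module (MonoidAlgebra ℤ G) A]
  {_ : Linear ℤ (Rep.{0} ℤ G)}

/-- The passage from `ℤG`-modules to representations of `G` over `ℤ`, as an isomorphism on `Ext`.
The `ℤ`-linear structure on `Rep ℤ G` is a parameter because instance search, over `ℤ`, does not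
find the one that `Rep k G` has over every `k`. -/
noncomputable def extZGEquiv :
    extZG G i A ≃ₗ[ℤ] ((Ext ℤ (Rep ℤ G) i).obj
      (op (Rep.ofModuleMonoidAlgebra.obj (ModuleCat.of (MonoidAlgebra ℤ G) A)))).obj
        (Rep.leftRegular ℤ G) :=
  have : HasExt.{0} (Rep.{0} ℤ G) := hasExt_of_enoughProjectives _
  have : HasExt.{0} (ModuleCat.{0} (MonoidAlgebra ℤ G)) := hasExt_of_enoughProjectives _
  let M := ModuleCat.of (MonoidAlgebra ℤ G) A
  let F := Rep.ofModuleMonoidAlgebra (k := ℤ) (G := G)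
  have : F.Additive := ⟨rfl⟩
  have : F.Linear ℤ := linear_int_of_additive_s6 F
  let adj : F ⊣ Rep.toModuleMonoidAlgebra := Rep.equivalenceModuleMonoidAlgebra.symm.toAdjunction
  (((Ext ℤ _ i).obj (op M)).mapIso
    Representation.ofMulActionSelfAsModuleEquiv.symm.toModuleIso).toLinearEquiv ≪≫ₗ
  extLinearEquiv.{0} ℤ _ i M ≪≫ₗ
  .ofBijective (adjunctionExtMap.{0} ℤ adj M (Rep.leftRegular ℤ G) i)
    (adjunctionExtMap_bijective ℤ adj _ _ i) ≪≫ₗ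
  (extLinearEquiv.{0} ℤ (Rep.leftRegular ℤ G) i (F.obj M)).symm

end Integers

theorem stmt6_general.{u} {k G : Type u} [CommRing k] [IsDomain k] [IsPrincipalIdealRing k]
    [Group G] (i : ℕ) (h1 : Module.Finite k (groupCohomology (Rep.ofMulAction k G G) i))
    (h2 : Module.Finite k (groupCohomology (Rep.ofMulAction k G G) (i - 1)))
    (A : Rep.{u} k G) (hA : Module.Finite k A.V) (hT : Finite (Submodule.torsion k A.V)) :
    Module.Finite k (((Ext k (Rep.{u} k G) i).obj (op A)).obj (Rep.ofMulAction k G G)) := by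
  have : HasExt.{u} (Rep.{u} k G) := hasExt_of_enoughProjectives _
  have := finite_ext_trivial i (Rep.ofMulAction k G G)
  have := finite_ext_trivial (i - 1) (Rep.ofMulAction k G G)
  have := finite_ext_leftRegular_s6 i A
  exact .equiv (extLinearEquiv.{u} k _ i A).symm

/-- If `H^i(G, ℤG)` and `H^{i-1}(G, ℤG)` are finitely generated abelian groups and `A` is a
`ℤG`-module whose underlying abelian group is finitely generated, then `Ext^i_{ℤG}(A, ℤG)`
is a finitely generated abelian group. -/
theorem stmt6 (G : Type) [Group G] (i : ℕ)
    (h1 : AddGroup.FG (groupCohomology (Rep.ofMulAction ℤ G G) i))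
    (h2 : AddGroup.FG (groupCohomology (Rep.ofMulAction ℤ G G) (i - 1)))
    (A : Type) [AddCommGroup A] [Module (MonoidAlgebra ℤ G) A]
    (hA : AddGroup.FG A) :
    AddGroup.FG (extZG G i A) := by
  have := stmt6_general i (moduleFinite_int_iff.2 h1) (moduleFinite_int_iff.2 h2)
    (Rep.ofModuleMonoidAlgebra.obj (.of _ A)) (moduleFinite_int_iff.2 hA) (finite_torsion_int hA)
  exact moduleFinite_int_iff.1 ((Module.Finite.equiv_iff (extZGEquiv G i A)).2 this)
end

section
/- Let G be a group with a finite-index subgroup H, and let A be a ZG-module on which H acts trivially and whose underlying abelian group is finite. Then for all i there is an isomorphism Ext^i_{ZH}(A, ZH) ≅ Ext^i_{ZG}(A, ZG). -/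
open CategoryTheory Opposite

/-- `Ext^i_{ℤG}(A, ℤG)` as an abelian group, where `ℤG = MonoidAlgebra ℤ G` acts on
itself by left multiplication. -/
noncomputable def extRG (G : Type) [Group G] (i : ℕ)
    (A : Type) [AddCommGroup A] [Module (MonoidAlgebra ℤ G) A] : ModuleCat ℤ :=
  ((Ext ℤ (ModuleCat (MonoidAlgebra ℤ G)) i).obj
    (op (ModuleCat.of (MonoidAlgebra ℤ G) A))).obj
    (ModuleCat.of (MonoidAlgebra ℤ G) (MonoidAlgebra ℤ G))

/-!
An adjunction `L ⊣ F` with `L` exact and `F` preserving epimorphisms carries projective resolutions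
to projective resolutions, which gives the Eckmann–Shapiro isomorphism `Ext(L X, Y) ≅ Ext(X, F Y)`.
Both ingredients needed to apply it to restriction and coextension of scalars along `k[H] → k[G]`
come from a single structure: forgetting coefficients outside `H` is a `k[H]`-bimodule map
`E : k[G] → k[H]`, for which the coset representatives and their inverses are dual bases. These
bases exhibit `k[G]` as a projective `k[H]`-module, so that coextension preserves epimorphisms, and
make `s ↦ E (· * s)` an isomorphism `k[G] ≅ Hom_{k[H]}(k[G], k[H])`.
-/

universe u v u₁ u₂ w

section Adjunction

variable {k : Type w} [Ring k] {C : Type u₁} {D : Type u₂} [Category.{v} C] [Category.{v} D]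

/-- The hom-set bijection of an adjunction with `k`-linear left adjoint, as a `k`-linear
equivalence. -/
def homLinearEquivOfAdjunction [Preadditive C] [Preadditive D] [Linear k C] [Linear k D]
    {L : C ⥤ D} {F : D ⥤ C} (adj : L ⊣ F) [L.Additive] [L.Linear k] (X : C) (Y : D) :
    (X ⟶ F.obj Y) ≃ₗ[k] (L.obj X ⟶ Y) where
  __ := (adj.homAddEquiv X Y).symm
  map_smul' a g := by simp [Adjunction.homEquiv_counit]

variable [Abelian C] [Abelian D] [Linear k C] [Linear k D] {L : C ⥤ D} {F : D ⥤ C}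

variable (k) in
/-- The degreewise adjunction isomorphism `Hom(L P, Y) ≅ Hom(P, F Y)` of cochain complexes. -/
def linearYonedaObjIsoOfAdjunction (adj : L ⊣ F) [L.Additive] [L.Linear k]
    (P : ChainComplex C ℕ) (Y : D) :
    ChainComplex.linearYonedaObj ((L.mapHomologicalComplex _).obj P) k Y ≅
      P.linearYonedaObj k (F.obj Y) :=
  HomologicalComplex.Hom.isoOfComponents
    (fun n ↦ (homLinearEquivOfAdjunction (k := k) adj (P.X n) Y).symm.toModuleIso)
    fun i j _ ↦ ModuleCat.hom_ext <| LinearMap.ext fun φ ↦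
      (adj.homEquiv_naturality_left (P.d j i) φ).symm

/-- The Eckmann–Shapiro isomorphism `Ext^i(L X, Y) ≅ Ext^i(X, F Y)` of an adjunction whose left
adjoint is exact and whose right adjoint preserves epimorphisms. -/
noncomputable def extIsoOfAdjunction [EnoughProjectives C] [EnoughProjectives D] (adj : L ⊣ F)
    [L.Additive] [L.Linear k] [L.PreservesHomology] [F.PreservesEpimorphisms]
    (X : C) (Y : D) (i : ℕ) :
    ((Ext k D i).obj (op (L.obj X))).obj Y ≅ ((Ext k C i).obj (op X)).obj (F.obj Y) :=
  have := L.preservesProjectiveObjects_of_adjunction_of_preservesEpimorphisms adj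
  let P := projectiveResolution X
  (L.mapProjectiveResolution P).isoExt i Y ≪≫
    (HomologicalComplex.homologyFunctor _ _ i).mapIso
      (linearYonedaObjIsoOfAdjunction k adj P.complex Y) ≪≫
    (P.isoExt i (F.obj Y)).symm

end Adjunction

section ChangeOfRings

variable {R S : Type u} [Ring R] [Ring S] (f : R →+* S)

lemma coextendScalars_preservesEpimorphisms
    [Module.Projective R ((ModuleCat.restrictScalars f).obj (ModuleCat.of S S))] :
    (ModuleCat.coextendScalars.{u, u, u} f).PreservesEpimorphisms where
  preserves {M N} p hp := by
    rw [ModuleCat.epi_iff_surjective] at hp ⊢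
    intro φ
    obtain ⟨ψ, hψ⟩ := Module.projective_lifting_property p.hom
      (ModuleCat.CoextendScalars.equiv f N φ) hp
    exact ⟨(ModuleCat.CoextendScalars.equiv f M).symm ψ, ModuleCat.CoextendScalars.ext hψ⟩

lemma restrictScalars_preservesHomology :
    (ModuleCat.restrictScalars.{u} f).PreservesHomology where
  preservesKernels _ _ _ := inferInstance
  preservesCokernels _ _ _ := inferInstance

/-- A module over both `R` and `S`, on which `R` acts through `f`, as a restriction of scalars. -/
noncomputable def isoRestrictScalars {A : Type u} [AddCommGroup A] [Module R A] [Module S A]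
    (hf : ∀ (r : R) (a : A), r • a = f r • a) :
    ModuleCat.of R A ≅ (ModuleCat.restrictScalars f).obj (ModuleCat.of S A) :=
  let e : A ≃ₗ[R] (ModuleCat.restrictScalars f).obj (ModuleCat.of S A) :=
    { AddEquiv.refl A with map_smul' := hf }
  e.toModuleIso

end ChangeOfRings

/-- A Frobenius system for a ring homomorphism `f : R →+* S`: an `R`-bimodule map `E : S → R`
(`form`) and dual bases `x`, `y` (`left`, `right`) such that
`∑ x i * E (y i * s) = s = ∑ E (s * x i) * y i`. It exhibits `S` as a Frobenius extension of `R`: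
finitely generated projective over `R`, with `Hom_R(S, R) ≅ S`. -/
structure FrobeniusSystem {R : Type u} {S : Type v} [Ring R] [Ring S] (f : R →+* S)
    (ι : Type w) [Fintype ι] where
  form : S →+ R
  form_map_mul : ∀ r s, form (f r * s) = r * form s
  form_mul_map : ∀ s r, form (s * f r) = form s * r
  left : ι → S
  right : ι → S
  sum_left_mul : ∀ s, ∑ i, left i * f (form (right i * s)) = s
  sum_mul_right : ∀ s, ∑ i, f (form (s * left i)) * right i = s

namespace FrobeniusSystem

section

variable {R : Type u} {S : Type v} [Ring R] [Ring S] {f : R →+* S} {ι : Type w} [Fintype ι]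

/-- The functional `t ↦ E (t * s)` on `S`, where `S` is a left `R`-module through `f`. -/
def toDual (F : FrobeniusSystem f ι) (s : S) :
    (ModuleCat.restrictScalars f).obj (ModuleCat.of S S) →ₗ[R] R where
  toFun := fun t : S ↦ F.form (t * s)
  map_add' := fun t t' : S ↦ (congrArg F.form (add_mul t t' s)).trans (F.form.map_add _ _)
  map_smul' := fun r (t : S) ↦
    (congrArg F.form (mul_assoc (f r) t s)).trans (F.form_map_mul r (t * s))

lemma projective (F : FrobeniusSystem f ι) :
    Module.Projective R ((ModuleCat.restrictScalars f).obj (ModuleCat.of S S)) :=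
  Module.Projective.of_split (LinearMap.pi fun i ↦ F.toDual (F.left i))
    (Fintype.linearCombination R F.right) (LinearMap.ext F.sum_mul_right)

lemma form_mul_sum (F : FrobeniusSystem f ι) {φ : S →+ R}
    (hφ : ∀ r s, φ (f r * s) = r * φ s) (s : S) :
    F.form (s * ∑ i, F.left i * f (φ (F.right i))) = φ s := by
  calc F.form (s * ∑ i, F.left i * f (φ (F.right i)))
      = ∑ i, F.form (s * F.left i) * φ (F.right i) := by
        simp only [Finset.mul_sum, map_sum, ← mul_assoc, F.form_mul_map]
    _ = φ (∑ i, f (F.form (s * F.left i)) * F.right i) := by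
        simp only [map_sum, hφ]
    _ = φ s := by rw [F.sum_mul_right]

end

variable {R S : Type u} [Ring R] [Ring S] {f : R →+* S} {ι : Type w} [Fintype ι]

/-- The isomorphism `S ≅ Hom_R(S, R)` sending `s` to `t ↦ E (t * s)`. -/
noncomputable def isoCoextendScalars (F : FrobeniusSystem f ι) :
    ModuleCat.of S S ≅ (ModuleCat.coextendScalars f).obj (ModuleCat.of R R) :=
  LinearEquiv.toModuleIso
    { toFun := fun s ↦ (ModuleCat.CoextendScalars.equiv f (ModuleCat.of R R)).symm (F.toDual s)
      map_add' := fun s s' ↦ ModuleCat.CoextendScalars.ext <| LinearMap.ext fun t : S ↦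
        (congrArg F.form (mul_add t s s')).trans (F.form.map_add _ _)
      map_smul' := fun a s ↦ ModuleCat.CoextendScalars.ext <| LinearMap.ext fun t : S ↦
        congrArg F.form (mul_assoc t a s).symm
      invFun := fun φ ↦
        ∑ i, F.left i * f (ModuleCat.CoextendScalars.equiv f (ModuleCat.of R R) φ (F.right i))
      left_inv := F.sum_left_mul
      right_inv := fun φ ↦ ModuleCat.CoextendScalars.ext <| LinearMap.ext <| F.form_mul_sum
        (φ := (ModuleCat.CoextendScalars.equiv f (ModuleCat.of R R) φ).toAddMonoidHom)
        (LinearMap.map_smul (ModuleCat.CoextendScalars.equiv f (ModuleCat.of R R) φ)) }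

/-- Eckmann–Shapiro for Frobenius extensions: `Ext^i_R(M, R) ≅ Ext^i_S(M, S)`. -/
noncomputable def extIso (F : FrobeniusSystem f ι) (M : ModuleCat.{u} S) (i : ℕ) :
    ((Ext ℤ (ModuleCat.{u} R) i).obj (op ((ModuleCat.restrictScalars f).obj M))).obj
      (ModuleCat.of R R) ≅
    ((Ext ℤ (ModuleCat.{u} S) i).obj (op M)).obj (ModuleCat.of S S) :=
  have := F.projective
  have := coextendScalars_preservesEpimorphisms f
  have := restrictScalars_preservesHomology f
  extIsoOfAdjunction (ModuleCat.restrictCoextendScalarsAdj.{u, u, u} f) M (ModuleCat.of R R) i ≪≫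
    ((Ext ℤ (ModuleCat.{u} S) i).obj (op M)).mapIso F.isoCoextendScalars.symm

end FrobeniusSystem

section GroupAlgebra

variable {k : Type u} {G : Type v} [Ring k] [Group G] (H : Subgroup G)

variable (k) in
/-- The inclusion `k[H] → k[G]` of group algebras. -/
noncomputable def subgroupInclusion : MonoidAlgebra k H →+* MonoidAlgebra k G :=
  MonoidAlgebra.mapDomainRingHom k H.subtype

variable (k) in
/-- The map `k[G] → k[H]` that forgets the coefficients outside `H`. -/
noncomputable def subgroupCoeffs : MonoidAlgebra k G →+ MonoidAlgebra k H :=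
  MonoidAlgebra.comapDomainAddMonoidHom Subtype.val Subtype.val_injective

lemma subgroupInclusion_single (h : H) (a : k) :
    subgroupInclusion k H (MonoidAlgebra.single h a) = MonoidAlgebra.single (h : G) a :=
  MonoidAlgebra.mapDomain_single

lemma subgroupCoeffs_single_coe (h : H) (a : k) :
    subgroupCoeffs k H (MonoidAlgebra.single (h : G) a) = MonoidAlgebra.single h a :=
  MonoidAlgebra.comapDomain_single_map _ Subtype.val_injective h a

variable {H} in
lemma subgroupCoeffs_single_of_notMem {g : G} (hg : g ∉ H) (a : k) :
    subgroupCoeffs k H (MonoidAlgebra.single g a) = 0 :=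
  MonoidAlgebra.comapDomain_single_of_not_mem_range (by simpa using hg)
    Subtype.val_injective

lemma subgroupInclusion_subgroupCoeffs_single [DecidablePred (· ∈ H)] (g : G) (a : k) :
    subgroupInclusion k H (subgroupCoeffs k H (MonoidAlgebra.single g a)) =
      if g ∈ H then MonoidAlgebra.single g a else 0 := by
  split_ifs with hg
  · lift g to H using hg
    rw [subgroupCoeffs_single_coe, subgroupInclusion_single]
  · rw [subgroupCoeffs_single_of_notMem hg, map_zero]

lemma subgroupCoeffs_subgroupInclusion_mul (r : MonoidAlgebra k H) (s : MonoidAlgebra k G) :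
    subgroupCoeffs k H (subgroupInclusion k H r * s) = r * subgroupCoeffs k H s := by
  induction r using MonoidAlgebra.induction_linear with
  | zero => simp only [map_zero, zero_mul]
  | add r r' hr hr' => simp only [map_add, add_mul, hr, hr']
  | single h a =>
    induction s using MonoidAlgebra.induction_linear with
    | zero => simp only [map_zero, mul_zero]
    | add s s' hs hs' => simp only [map_add, mul_add, hs, hs']
    | single g b =>
      rw [subgroupInclusion_single, MonoidAlgebra.single_mul_single]
      by_cases hg : g ∈ H
      · lift g to H using hg
        rw [← Subgroup.coe_mul, subgroupCoeffs_single_coe, subgroupCoeffs_single_coe,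
          MonoidAlgebra.single_mul_single]
      · rw [subgroupCoeffs_single_of_notMem hg, mul_zero, subgroupCoeffs_single_of_notMem]
        rwa [H.mul_mem_cancel_left h.2]

lemma subgroupCoeffs_mul_subgroupInclusion (s : MonoidAlgebra k G) (r : MonoidAlgebra k H) :
    subgroupCoeffs k H (s * subgroupInclusion k H r) = subgroupCoeffs k H s * r := by
  induction r using MonoidAlgebra.induction_linear with
  | zero => simp only [map_zero, mul_zero]
  | add r r' hr hr' => simp only [map_add, mul_add, hr, hr']
  | single h a =>
    induction s using MonoidAlgebra.induction_linear with
    | zero => simp only [map_zero, zero_mul]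
    | add s s' hs hs' => simp only [map_add, add_mul, hs, hs']
    | single g b =>
      rw [subgroupInclusion_single, MonoidAlgebra.single_mul_single]
      by_cases hg : g ∈ H
      · lift g to H using hg
        rw [← Subgroup.coe_mul, subgroupCoeffs_single_coe, subgroupCoeffs_single_coe,
          MonoidAlgebra.single_mul_single]
      · rw [subgroupCoeffs_single_of_notMem hg, zero_mul, subgroupCoeffs_single_of_notMem]
        rwa [H.mul_mem_cancel_right h.2]

lemma sum_out_mul_subgroupCoeffs [Fintype (G ⧸ H)] (s : MonoidAlgebra k G) :
    ∑ q : G ⧸ H, MonoidAlgebra.single q.out 1 *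
      subgroupInclusion k H (subgroupCoeffs k H (MonoidAlgebra.single q.out⁻¹ 1 * s)) = s := by
  classical
  induction s using MonoidAlgebra.induction_linear with
  | zero => simp only [mul_zero, map_zero, Finset.sum_const_zero]
  | add s s' hs hs' => simp only [mul_add, map_add, Finset.sum_add_distrib, hs, hs']
  | single g a =>
    have mem_iff (q : G ⧸ H) : q.out⁻¹ * g ∈ H ↔ q = g := by
      rw [← QuotientGroup.eq, QuotientGroup.out_eq']
    simp [subgroupInclusion_subgroupCoeffs_single, mem_iff]

lemma sum_subgroupCoeffs_mul_out_inv [Fintype (G ⧸ H)] (s : MonoidAlgebra k G) :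
    ∑ q : G ⧸ H, subgroupInclusion k H (subgroupCoeffs k H (s * MonoidAlgebra.single q.out 1)) *
      MonoidAlgebra.single q.out⁻¹ 1 = s := by
  classical
  induction s using MonoidAlgebra.induction_linear with
  | zero => simp only [zero_mul, map_zero, Finset.sum_const_zero]
  | add s s' hs hs' => simp only [add_mul, map_add, Finset.sum_add_distrib, hs, hs']
  | single g a =>
    have mem_iff (q : G ⧸ H) : g * q.out ∈ H ↔ ↑g⁻¹ = q := by
      rw [← QuotientGroup.out_eq' q, QuotientGroup.eq, inv_inv, QuotientGroup.out_eq']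
    simp [subgroupInclusion_subgroupCoeffs_single, mem_iff]

variable (k) in
/-- The Frobenius system of `k[H] ⊆ k[G]` for a subgroup `H` of finite index, whose dual bases are
the representatives of the left cosets and their inverses. -/
noncomputable def subgroupFrobeniusSystem [Fintype (G ⧸ H)] :
    FrobeniusSystem (subgroupInclusion k H) (G ⧸ H) where
  form := subgroupCoeffs k H
  form_map_mul := subgroupCoeffs_subgroupInclusion_mul H
  form_mul_map := subgroupCoeffs_mul_subgroupInclusion H
  left q := MonoidAlgebra.single q.out 1
  right q := MonoidAlgebra.single q.out⁻¹ 1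
  sum_left_mul := sum_out_mul_subgroupCoeffs H
  sum_mul_right := sum_subgroupCoeffs_mul_out_inv H

lemma smul_eq_subgroupInclusion_smul {A : Type w} [AddCommGroup A] [Module (MonoidAlgebra ℤ G) A]
    [Module (MonoidAlgebra ℤ H) A]
    (hres : ∀ (h : H) (a : A),
      MonoidAlgebra.single h (1 : ℤ) • a = MonoidAlgebra.single (h : G) (1 : ℤ) • a)
    (r : MonoidAlgebra ℤ H) (a : A) : r • a = subgroupInclusion ℤ H r • a := by
  induction r using MonoidAlgebra.induction_linear with
  | zero => simp only [map_zero, zero_smul]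
  | add r r' hr hr' => simp only [map_add, add_smul, hr, hr']
  | single h n =>
    have single_eq : MonoidAlgebra.single h n = n • MonoidAlgebra.single h (1 : ℤ) := by simp
    rw [single_eq, map_zsmul, smul_assoc, smul_assoc, hres, subgroupInclusion_single]

end GroupAlgebra

theorem stmt15_general (k G : Type u) [Ring k] [Group G] (H : Subgroup G) [H.FiniteIndex]
    (A : Type u) [AddCommGroup A] [Module (MonoidAlgebra k G) A] [Module (MonoidAlgebra k H) A]
    (hres : ∀ (r : MonoidAlgebra k H) (a : A), r • a = subgroupInclusion k H r • a) (i : ℕ) :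
    Nonempty
      (((Ext ℤ (ModuleCat.{u} (MonoidAlgebra k H)) i).obj
          (op (ModuleCat.of (MonoidAlgebra k H) A))).obj
          (ModuleCat.of (MonoidAlgebra k H) (MonoidAlgebra k H)) ≃+
        ((Ext ℤ (ModuleCat.{u} (MonoidAlgebra k G)) i).obj
          (op (ModuleCat.of (MonoidAlgebra k G) A))).obj
          (ModuleCat.of (MonoidAlgebra k G) (MonoidAlgebra k G))) :=
  let _ : Fintype (G ⧸ H) := H.fintypeQuotientOfFiniteIndex
  let restriction := isoRestrictScalars (subgroupInclusion k H) hres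
  ⟨(((Ext ℤ (ModuleCat (MonoidAlgebra k H)) i).mapIso restriction.op.symm).app _ ≪≫
    (subgroupFrobeniusSystem k H).extIso _ i).toLinearEquiv.toAddEquiv⟩

/-- Let `H ≤ G` be of finite index and `A` a `ℤG`-module, finite as an abelian group,
whose restricted `ℤH`-module structure (i.e. the `ℤH`-action is the restriction of the
`ℤG`-action along `H ≤ G`) is trivial.  Then for every `i`,
`Ext^i_{ℤH}(A, ℤH) ≅ Ext^i_{ℤG}(A, ℤG)` as abelian groups (Eckmann–Shapiro combined with
`Hom_{ℤH}(ℤG, ℤH) ≅ ℤG`). -/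
theorem stmt15 (G : Type) [Group G] (H : Subgroup G) [H.FiniteIndex]
    (A : Type) [AddCommGroup A] [Finite A]
    [Module (MonoidAlgebra ℤ G) A] [Module (MonoidAlgebra ℤ H) A]
    (hres : ∀ (h : H) (a : A),
      (MonoidAlgebra.single h (1 : ℤ)) • a = (MonoidAlgebra.single (h : G) (1 : ℤ)) • a)
    (htriv : ∀ (h : H) (a : A), (MonoidAlgebra.single (h : G) (1 : ℤ)) • a = a)
    (i : ℕ) :
    Nonempty ((extRG H i A) ≃+ (extRG G i A)) :=
  stmt15_general ℤ G H A (smul_eq_subgroupInclusion_smul H hres) i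
end
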